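/- Let 1 < p < ∞, -1 < α < ∞, let φ be a nonzero bounded linear functional on A^p_α with extremal function F, and for n ≥ 0 let F_n be the degree-n extremal polynomial for φ. Suppose 0 < δ < 1 and E_n^{p,α}(F) ≤ δ. Then Re φ(F_n) ≥ ((1-δ)/(1+δ)) ‖φ‖, and consequently ‖F - F_n‖_{p,α} ≤ √(8/(p-1)) · δ^{1/2} if 1 < p ≤ 2, and ‖F - F_n‖_{p,α} ≤ 2 p^{1/p} δ^{1/p} if 2 ≤ p < ∞. -/

import Mathlib

/-!
Scaling a near-best polynomial approximant `P` of `F` to the unit ball and using extremality of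
`F_n` gives `(1 - ε)‖φ‖ ≤ Re φ(P) ≤ (1 + ε) Re φ(F_n)` for every `ε > δ`, hence the lower bound for
`Re φ(F_n)` (`re_extremalPoly_ge`). Consequently `u = (F + F_n) / 2` satisfies
`Re φ(u) ≥ ‖φ‖ / (1 + δ)`, so `‖u‖ ≥ 1 - δ`, and uniform convexity of `L^p` bounds
`v = (F - F_n) / 2`.

* For `p ≥ 2`, Clarkson's inequality (`clarkson_integral`) gives `‖u‖^p + ‖v‖^p ≤ 1`; by Bernoulli's
  inequality `‖v‖^p ≤ 1 - (1 - δ)^p ≤ p δ`.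
* For `1 < p ≤ 2`, the sharp 2-uniform convexity of `L^p` (`two_uniform_convexity`) gives
  `‖u‖² + (p - 1)‖v‖² ≤ 1`, so `(p - 1)‖v‖² ≤ 1 - (1 - δ)² ≤ 2 δ`. It follows from the two-point
  inequality `(|a|² + (p - 1)|b|²)^(p/2) ≤ (|a + b|^p + |a - b|^p) / 2` (`two_point_complex`): a
  second-order Taylor bound settles real `a`, `b`, concavity of `s ↦ s^(p/2)` reduces complex
  `a`, `b` to real ones, and a Jensen argument passes from the pointwise bound to the norms.

The Bergman norm is treated as the `L^p` norm of the measure `dA_α`, which is finite because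
`α > -1`; in particular all polynomials belong to `A^p_α`.
-/


open MeasureTheory Complex Set Metric

noncomputable section

/-- The open unit disc in `ℂ`. -/
def unitDisc : Set ℂ := Metric.ball 0 1

/-- The density of the weighted measure `dA_α = (α+1) π⁻¹ (1-|z|²)^α dA`
with respect to area measure. -/
def wt (α : ℝ) (z : ℂ) : ℝ := (α + 1) / Real.pi * (1 - ‖z‖ ^ 2) ^ α

/-- The norm `‖f‖_{p,α}` of the weighted Bergman space `A^p_α`. -/
def bNorm (p α : ℝ) (f : ℂ → ℂ) : ℝ :=
  (∫ z in unitDisc, ‖f z‖ ^ p * wt α z) ^ (1 / p)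

/-- Membership in the weighted Bergman space `A^p_α`: analytic on the unit disc
with finite weighted `p`-norm. -/
def MemAp (p α : ℝ) (f : ℂ → ℂ) : Prop :=
  DifferentiableOn ℂ f unitDisc ∧
    IntegrableOn (fun z => ‖f z‖ ^ p * wt α z) unitDisc

/-- `E_n^{p,α}(f)`: the distance from `f` to the polynomials of degree at most `n`
in the `A^p_α` norm. -/
def polyErr (p α : ℝ) (n : ℕ) (f : ℂ → ℂ) : ℝ :=
  sInf {e | ∃ P : Polynomial ℂ, P.natDegree ≤ n ∧
    e = bNorm p α fun z => f z - P.eval z}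

/-- The norm of a linear functional restricted to the unit ball of `A^p_α`. -/
def dualNorm (p α : ℝ) (φ : (ℂ → ℂ) →ₗ[ℂ] ℂ) : ℝ :=
  sSup {r | ∃ f, MemAp p α f ∧ bNorm p α f ≤ 1 ∧ r = (φ f).re}

/-- `F` is the extremal function for the functional `φ`: it lies in `A^p_α`,
has unit norm, and `Re φ(F) = ‖φ‖`. -/
def IsExtremalFn (p α : ℝ) (φ : (ℂ → ℂ) →ₗ[ℂ] ℂ) (F : ℂ → ℂ) : Prop :=
  MemAp p α F ∧ bNorm p α F = 1 ∧ (φ F).re = dualNorm p α φ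

/-- `Q` is the degree-`n` extremal polynomial for the functional `φ`. -/
def IsExtremalPoly (p α : ℝ) (φ : (ℂ → ℂ) →ₗ[ℂ] ℂ) (n : ℕ) (Q : Polynomial ℂ) : Prop :=
  Q.natDegree ≤ n ∧ bNorm p α (fun z => Q.eval z) = 1 ∧
    ∀ P : Polynomial ℂ, P.natDegree ≤ n → bNorm p α (fun z => P.eval z) ≤ 1 →
      (φ fun z => P.eval z).re ≤ (φ fun z => Q.eval z).re

/-! ### Two-point inequalities -/

/-- For `1 < p ≤ 2`, the even part of `(1+x)^p` dominates its second-order Taylor polynomial. -/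
lemma two_add_le_rpow_add_rpow {p x : ℝ} (hp : 1 < p) (hp2 : p ≤ 2) (hx : x ∈ Icc (0:ℝ) 1) :
    2 + p * (p - 1) * x ^ 2 ≤ (1 + x) ^ p + (1 - x) ^ p := by
  have h0 : (0:ℝ) ∈ Icc (0:ℝ) 1 := by simp
  -- the derivative, up to the factor `p`, of the difference of the two sides
  have hmono1 : MonotoneOn (fun x : ℝ => (1 + x) ^ (p - 1) - (1 - x) ^ (p - 1) - 2 * (p - 1) * x)
      (Icc 0 1) := by
    have hd : ∀ y ∈ Ioo (0:ℝ) 1, HasDerivAt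
        (fun x : ℝ => (1 + x) ^ (p - 1) - (1 - x) ^ (p - 1) - 2 * (p - 1) * x)
        ((p - 1) * ((1 + y) ^ (p - 1 - 1) + (1 - y) ^ (p - 1 - 1) - 2)) y := by
      intro y hy
      have h1 := ((hasDerivAt_id y).const_add 1).rpow_const (p := p - 1)
        (Or.inl (by simp only [id]; linarith [hy.1]))
      have h2 := ((hasDerivAt_id y).const_sub 1).rpow_const (p := p - 1)
        (Or.inl (by simp only [id]; linarith [hy.2]))
      convert! (h1.sub h2).sub ((hasDerivAt_id y).const_mul (2 * (p - 1))) using 1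
      simp only [id]
      ring
    refine monotoneOn_of_deriv_nonneg (convex_Icc 0 1) ?_ ?_ ?_
    · have : 0 ≤ p - 1 := by linarith
      fun_prop (disch := assumption)
    · rw [interior_Icc]
      exact fun y hy => (hd y hy).differentiableAt.differentiableWithinAt
    · rw [interior_Icc]
      intro y hy
      rw [(hd y hy).deriv]
      refine mul_nonneg (by linarith) ?_
      have e1 : 0 < 1 + y := by linarith [hy.1]
      have e2 : 0 < 1 - y := by linarith [hy.2]
      have h1 := Real.rpow_pos_of_pos e1 (p - 1 - 1)
      have h2 := Real.rpow_pos_of_pos e2 (p - 1 - 1)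
      have h3 : 1 ≤ (1 + y) ^ (p - 1 - 1) * (1 - y) ^ (p - 1 - 1) := by
        rw [← Real.mul_rpow e1.le e2.le]
        exact Real.one_le_rpow_of_pos_of_le_one_of_nonpos (by positivity)
          (by nlinarith [hy.1]) (by linarith)
      nlinarith [sq_nonneg ((1 + y) ^ (p - 1 - 1) - (1 - y) ^ (p - 1 - 1))]
  have hmono2 : MonotoneOn (fun x : ℝ => (1 + x) ^ p + (1 - x) ^ p - p * (p - 1) * x ^ 2)
      (Icc 0 1) := by
    have hd : ∀ y ∈ Ioo (0:ℝ) 1, HasDerivAt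
        (fun x : ℝ => (1 + x) ^ p + (1 - x) ^ p - p * (p - 1) * x ^ 2)
        (p * ((1 + y) ^ (p - 1) - (1 - y) ^ (p - 1) - 2 * (p - 1) * y)) y := by
      intro y hy
      have h1 := ((hasDerivAt_id y).const_add 1).rpow_const (p := p)
        (Or.inl (by simp only [id]; linarith [hy.1]))
      have h2 := ((hasDerivAt_id y).const_sub 1).rpow_const (p := p)
        (Or.inl (by simp only [id]; linarith [hy.2]))
      convert! (h1.add h2).sub (((hasDerivAt_id y).pow 2).const_mul (p * (p - 1))) using 1
      simp only [id]
      ring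
    refine monotoneOn_of_deriv_nonneg (convex_Icc 0 1) ?_ ?_ ?_
    · have : 0 ≤ p := by linarith
      fun_prop (disch := assumption)
    · rw [interior_Icc]
      exact fun y hy => (hd y hy).differentiableAt.differentiableWithinAt
    · rw [interior_Icc]
      intro y hy
      rw [(hd y hy).deriv]
      refine mul_nonneg (by linarith) ?_
      have := hmono1 h0 (Ioo_subset_Icc_self hy) hy.1.le
      simpa using this
  have := hmono2 h0 hx hx.1
  norm_num at this
  linarith

lemma sq_rpow_half {x : ℝ} (hx : 0 ≤ x) (p : ℝ) : (x ^ 2) ^ (p / 2) = x ^ p := by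
  rw [← Real.rpow_natCast, ← Real.rpow_mul hx]; congr 1; push_cast; ring

/-- The two-point inequality behind the 2-uniform convexity of `L^p`, for nonnegative reals. -/
lemma two_point_real {p a b : ℝ} (hp : 1 < p) (hp2 : p ≤ 2) (ha : 0 ≤ a) (hb : 0 ≤ b) :
    (a ^ 2 + (p - 1) * b ^ 2) ^ (p / 2) ≤ ((a + b) ^ p + |a - b| ^ p) / 2 := by
  -- the weight `p - 1 ≤ 1` may be moved to the smaller of the two numbers
  wlog hab : b ≤ a generalizing a b
  · have h := this hb ha (le_of_not_ge hab)
    rw [add_comm b a, abs_sub_comm] at h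
    refine le_trans (Real.rpow_le_rpow ?_ ?_ (by linarith)) h
    · have : 0 ≤ p - 1 := by linarith
      positivity
    · have h2 : 0 ≤ b ^ 2 - a ^ 2 := by nlinarith
      nlinarith
  rcases ha.eq_or_lt with rfl | ha
  · obtain rfl : b = 0 := le_antisymm hab hb
    have : p ≠ 0 := by linarith
    simp [Real.zero_rpow this, this]
  have hx : b / a ∈ Icc (0:ℝ) 1 := ⟨by positivity, (div_le_one ha).2 hab⟩
  have h1 := two_add_le_rpow_add_rpow hp hp2 hx
  have hk : 0 ≤ (p - 1) * (b / a) ^ 2 := mul_nonneg (by linarith) (sq_nonneg _)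
  have h2 := rpow_one_add_le_one_add_mul_self (s := (p - 1) * (b / a) ^ 2) (by linarith)
    (p := p / 2) (by linarith) (by linarith)
  have e1 : a ^ 2 + (p - 1) * b ^ 2 = a ^ 2 * (1 + (p - 1) * (b / a) ^ 2) := by field_simp
  have e2 : a + b = a * (1 + b / a) := by field_simp
  have e3 : |a - b| = a * (1 - b / a) := by
    rw [abs_of_nonneg (by linarith)]; field_simp
  rw [e1, e2, e3, Real.mul_rpow (by positivity) (by linarith), sq_rpow_half ha.le,
    Real.mul_rpow ha.le (by linarith [hx.1]), Real.mul_rpow ha.le (by linarith [hx.2])]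
  have := Real.rpow_pos_of_pos ha p
  nlinarith

/-- The parallelogram identity and Cauchy-Schwarz, in the form used below. -/
lemma exists_cross_term (a b : ℂ) : ∃ t : ℝ, |t| ≤ 2 * ‖a‖ * ‖b‖ ∧
    ‖a + b‖ ^ 2 = ‖a‖ ^ 2 + ‖b‖ ^ 2 + t ∧ ‖a - b‖ ^ 2 = ‖a‖ ^ 2 + ‖b‖ ^ 2 - t := by
  refine ⟨2 * inner ℝ a b, ?_, ?_, ?_⟩
  · rw [abs_mul, abs_two, mul_assoc]
    linarith [abs_real_inner_le_norm a b]
  · rw [norm_add_sq_real]; ring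
  · rw [norm_sub_sq_real]; ring

/-- The two-point inequality for complex numbers. For given moduli, concavity of `s ↦ s^(p/2)`
makes the right-hand side smallest when `a` and `b` are real multiples of each other. -/
lemma two_point_complex {p : ℝ} (hp : 1 < p) (hp2 : p ≤ 2) (a b : ℂ) :
    (‖a‖ ^ 2 + (p - 1) * ‖b‖ ^ 2) ^ (p / 2) ≤ (‖a + b‖ ^ p + ‖a - b‖ ^ p) / 2 := by
  obtain ⟨t, ht, h1, h2⟩ := exists_cross_term a b
  refine (two_point_real hp hp2 (norm_nonneg a) (norm_nonneg b)).trans ?_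
  rw [← sq_rpow_half (norm_nonneg (a + b)), ← sq_rpow_half (norm_nonneg (a - b)),
    ← sq_rpow_half (abs_nonneg (‖a‖ - ‖b‖)), sq_abs, h1, h2,
    ← sq_rpow_half (by positivity : 0 ≤ ‖a‖ + ‖b‖)]
  have e1 : (‖a‖ + ‖b‖) ^ 2 = ‖a‖ ^ 2 + ‖b‖ ^ 2 + 2 * ‖a‖ * ‖b‖ := by ring
  have e2 : (‖a‖ - ‖b‖) ^ 2 = ‖a‖ ^ 2 + ‖b‖ ^ 2 - 2 * ‖a‖ * ‖b‖ := by ring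
  have hA : 0 ≤ (‖a‖ + ‖b‖) ^ 2 := sq_nonneg _
  have hB : 0 ≤ (‖a‖ - ‖b‖) ^ 2 := sq_nonneg _
  rw [e1] at hA ⊢
  rw [e2] at hB ⊢
  set S := ‖a‖ ^ 2 + ‖b‖ ^ 2
  have hT0 : 0 ≤ 2 * ‖a‖ * ‖b‖ := by positivity
  set T := 2 * ‖a‖ * ‖b‖
  rcases hT0.eq_or_lt with hT | hT
  · have : t = 0 := abs_nonpos_iff.1 (by rw [hT]; exact ht)
    simp [this, ← hT]
  obtain ⟨ht1, ht2⟩ := abs_le.1 ht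
  have hc := Real.concaveOn_rpow (p := p / 2) (by linarith) (by linarith)
  have hl1 : 0 ≤ (T + t) / (2 * T) := div_nonneg (by linarith) (by linarith)
  have hl2 : 0 ≤ (T - t) / (2 * T) := div_nonneg (by linarith) (by linarith)
  have hl : (T + t) / (2 * T) + (T - t) / (2 * T) = 1 := by field_simp; ring
  have k1 := hc.2 (mem_Ici.2 hA) (mem_Ici.2 hB) hl1 hl2 hl
  have k2 := hc.2 (mem_Ici.2 hA) (mem_Ici.2 hB) hl2 hl1 (by linarith)
  simp only [smul_eq_mul] at k1 k2
  have e3 : (T + t) / (2 * T) * (S + T) + (T - t) / (2 * T) * (S - T) = S + t := by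
    field_simp; ring
  have e4 : (T - t) / (2 * T) * (S + T) + (T + t) / (2 * T) * (S - T) = S - t := by
    field_simp; ring
  rw [e3] at k1
  rw [e4] at k2
  have e5 : (T - t) / (2 * T) = 1 - (T + t) / (2 * T) := by linarith
  rw [e5] at k1 k2
  linarith

/-- The pointwise form of Clarkson's inequality for `p ≥ 2`. -/
lemma clarkson_pointwise {p : ℝ} (hp : 2 ≤ p) (a b : ℂ) :
    ‖a‖ ^ p + ‖b‖ ^ p ≤ (‖a + b‖ ^ p + ‖a - b‖ ^ p) / 2 := by
  obtain ⟨t, -, h1, h2⟩ := exists_cross_term a b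
  have k1 : ‖a‖ ^ p + ‖b‖ ^ p ≤ (‖a‖ ^ 2 + ‖b‖ ^ 2) ^ (p / 2) := by
    rw [← sq_rpow_half (norm_nonneg a), ← sq_rpow_half (norm_nonneg b)]
    exact Real.add_rpow_le_rpow_add (sq_nonneg _) (sq_nonneg _) (by linarith)
  refine k1.trans ?_
  have hc := (convexOn_rpow (p := p / 2) (by linarith)).2
    (mem_Ici.2 (sq_nonneg ‖a + b‖)) (mem_Ici.2 (sq_nonneg ‖a - b‖))
    (by norm_num : (0:ℝ) ≤ 1/2) (by norm_num : (0:ℝ) ≤ 1/2) (by norm_num)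
  simp only [smul_eq_mul, sq_rpow_half (norm_nonneg _)] at hc
  have e : 1 / 2 * ‖a + b‖ ^ 2 + 1 / 2 * ‖a - b‖ ^ 2 = ‖a‖ ^ 2 + ‖b‖ ^ 2 := by
    rw [h1, h2]; ring
  rw [e] at hc
  linarith

/-! ### Uniform convexity of `L^p` at the unit sphere -/

section UniformConvexity

variable {X : Type*} [MeasurableSpace X] {μ : Measure X} {p : ℝ}

/-- Clarkson's inequality for two functions of unit norm; `u` is half their sum and `v` half
their difference. -/
lemma clarkson_integral (hp : 2 ≤ p) {u v : X → ℂ}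
    (hu : Integrable (fun x => ‖u x‖ ^ p) μ) (hv : Integrable (fun x => ‖v x‖ ^ p) μ)
    (hs : Integrable (fun x => ‖u x + v x‖ ^ p) μ) (hd : Integrable (fun x => ‖u x - v x‖ ^ p) μ)
    (hs1 : ∫ x, ‖u x + v x‖ ^ p ∂μ = 1) (hd1 : ∫ x, ‖u x - v x‖ ^ p ∂μ = 1) :
    ∫ x, ‖u x‖ ^ p ∂μ + ∫ x, ‖v x‖ ^ p ∂μ ≤ 1 := by
  have h := integral_mono (hu.add hv) ((hs.add hd).div_const 2)
    (fun x => clarkson_pointwise hp (u x) (v x))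
  simp only [Pi.add_apply] at h
  rw [integral_add hu hv, integral_div, integral_add hs hd, hs1, hd1] at h
  linarith

/-- The 2-uniform convexity of `L^p`, `1 < p ≤ 2`, for two functions of unit norm; `u` is half
their sum and `v` half their difference. -/
lemma two_uniform_convexity (hp : 1 < p) (hp2 : p ≤ 2) {u v : X → ℂ}
    (hu : Integrable (fun x => ‖u x‖ ^ p) μ) (hv : Integrable (fun x => ‖v x‖ ^ p) μ)
    (hs : Integrable (fun x => ‖u x + v x‖ ^ p) μ) (hd : Integrable (fun x => ‖u x - v x‖ ^ p) μ)
    (hs1 : ∫ x, ‖u x + v x‖ ^ p ∂μ = 1) (hd1 : ∫ x, ‖u x - v x‖ ^ p ∂μ = 1)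
    (hA : 0 < ∫ x, ‖u x‖ ^ p ∂μ) (hB : 0 < ∫ x, ‖v x‖ ^ p ∂μ) :
    ((∫ x, ‖u x‖ ^ p ∂μ) ^ (1 / p)) ^ 2 + (p - 1) * ((∫ x, ‖v x‖ ^ p ∂μ) ^ (1 / p)) ^ 2 ≤ 1 := by
  set A := ∫ x, ‖u x‖ ^ p ∂μ with hAdef
  set B := ∫ x, ‖v x‖ ^ p ∂μ with hBdef
  have hp0 : 0 < p := by linarith
  have ha : 0 < A ^ (1 / p) := Real.rpow_pos_of_pos hA _
  have hb : 0 < B ^ (1 / p) := Real.rpow_pos_of_pos hB _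
  have hap : (A ^ (1 / p)) ^ p = A := by
    rw [← Real.rpow_mul hA.le, one_div_mul_cancel hp0.ne', Real.rpow_one]
  have hbp : (B ^ (1 / p)) ^ p = B := by
    rw [← Real.rpow_mul hB.le, one_div_mul_cancel hp0.ne', Real.rpow_one]
  set a := A ^ (1 / p)
  set b := B ^ (1 / p)
  have hk : 0 < p - 1 := by linarith
  set N := a ^ 2 + (p - 1) * b ^ 2 with hN
  have hNpos : 0 < N := by positivity
  -- Jensen's inequality for `s ↦ s^(p/2)` with weights proportional to `a²` and `(p-1) b²`
  have key : ∀ x, N ^ (p / 2) * (a ^ 2 / N * (‖u x‖ ^ p / A) +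
      (p - 1) * b ^ 2 / N * (‖v x‖ ^ p / B)) ≤ (‖u x + v x‖ ^ p + ‖u x - v x‖ ^ p) / 2 := by
    intro x
    refine le_trans ?_ (two_point_complex hp hp2 (u x) (v x))
    have hc := (Real.concaveOn_rpow (p := p / 2) (by linarith) (by linarith)).2
      (mem_Ici.2 (sq_nonneg (‖u x‖ / a))) (mem_Ici.2 (sq_nonneg (‖v x‖ / b)))
      (by positivity : 0 ≤ a ^ 2 / N) (by positivity : 0 ≤ (p - 1) * b ^ 2 / N)
      (by rw [← add_div, ← hN]; exact div_self hNpos.ne')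
    simp only [smul_eq_mul] at hc
    rw [sq_rpow_half (by positivity), sq_rpow_half (by positivity),
      Real.div_rpow (norm_nonneg _) ha.le, Real.div_rpow (norm_nonneg _) hb.le, hap, hbp] at hc
    have e : ‖u x‖ ^ 2 + (p - 1) * ‖v x‖ ^ 2 =
        N * (a ^ 2 / N * (‖u x‖ / a) ^ 2 + (p - 1) * b ^ 2 / N * (‖v x‖ / b) ^ 2) := by
      field_simp
    rw [e, Real.mul_rpow hNpos.le (by positivity)]
    exact mul_le_mul_of_nonneg_left hc (by positivity)
  have i1 := (hu.div_const A).const_mul (a ^ 2 / N)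
  have i2 := (hv.div_const B).const_mul ((p - 1) * b ^ 2 / N)
  have h := integral_mono ((i1.add i2).const_mul (N ^ (p / 2))) ((hs.add hd).div_const 2) key
  simp only [Pi.add_apply] at h
  rw [integral_const_mul, integral_add i1 i2, integral_const_mul, integral_const_mul,
    integral_div, integral_div, ← hAdef, ← hBdef, div_self hA.ne', div_self hB.ne', mul_one,
    mul_one, ← add_div, ← hN, div_self hNpos.ne', integral_div, integral_add hs hd, hs1, hd1] at h
  by_contra! hlt
  have := Real.one_lt_rpow hlt (by linarith : 0 < p / 2)
  linarith

end UniformConvexity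

/-! ### The weighted area measure -/

/-- The measure `dA_α` on the unit disc. -/
def areaMeasure (α : ℝ) : Measure ℂ :=
  (volume.restrict unitDisc).withDensity fun z => ENNReal.ofReal (wt α z)

lemma measurable_wt (α : ℝ) : Measurable (wt α) := by
  unfold wt
  fun_prop

lemma wt_nonneg {α : ℝ} (hα : -1 < α) {z : ℂ} (hz : z ∈ unitDisc) : 0 ≤ wt α z := by
  have hz : ‖z‖ < 1 := by simpa [unitDisc] using hz
  have h1 : 0 ≤ 1 - ‖z‖ ^ 2 := by nlinarith [norm_nonneg z]
  have h2 : 0 ≤ α + 1 := by linarith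
  unfold wt
  positivity

lemma measurableSet_unitDisc : MeasurableSet unitDisc := measurableSet_ball

lemma wt_mul_ae {α : ℝ} (hα : -1 < α) (h : ℂ → ℝ) :
    (fun z => (ENNReal.ofReal (wt α z)).toReal • h z) =ᵐ[volume.restrict unitDisc]
      fun z => h z * wt α z := by
  filter_upwards [ae_restrict_mem measurableSet_unitDisc] with z hz
  rw [ENNReal.toReal_ofReal (wt_nonneg hα hz), smul_eq_mul, mul_comm]

lemma integral_areaMeasure {α : ℝ} (hα : -1 < α) (h : ℂ → ℝ) :
    ∫ z, h z ∂areaMeasure α = ∫ z in unitDisc, h z * wt α z := by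
  rw [areaMeasure, integral_withDensity_eq_integral_toReal_smul
    (measurable_wt α).ennreal_ofReal (by simp), integral_congr_ae (wt_mul_ae hα h)]

lemma integrable_areaMeasure {α : ℝ} (hα : -1 < α) (h : ℂ → ℝ) :
    Integrable h (areaMeasure α) ↔ IntegrableOn (fun z => h z * wt α z) unitDisc := by
  rw [areaMeasure, integrable_withDensity_iff_integrable_smul'
    (measurable_wt α).ennreal_ofReal (by simp), integrable_congr (wt_mul_ae hα h), IntegrableOn]

/-- The weight is integrable over the disc, by integration in polar coordinates. -/
lemma integrableOn_wt {α : ℝ} (hα : -1 < α) : IntegrableOn (wt α) unitDisc := by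
  have h := (integrableOn_fun_norm_addHaar (E := ℂ) (volume : Measure ℂ) (r := 1)
    (f := fun r : ℝ => (α + 1) / Real.pi * (1 - r ^ 2) ^ α))
  refine h.2 ?_
  have i1 : IntervalIntegrable (fun x : ℝ => (1 - x) ^ α) volume 0 1 := by
    have := (intervalIntegral.intervalIntegrable_rpow' (a := 0) (b := 1) hα).comp_sub_left 1
    simpa using this.symm
  have i2 : ContinuousOn (fun x : ℝ => x * ((α + 1) / Real.pi * (1 + x) ^ α)) (uIcc 0 1) := by
    rw [uIcc_of_le zero_le_one]
    refine continuousOn_id.mul (continuousOn_const.mul ?_)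
    exact ContinuousOn.rpow_const (by fun_prop) fun x hx => Or.inl (by linarith [hx.1])
  have i3 := (intervalIntegrable_iff_integrableOn_Ioo_of_le zero_le_one).1 (i1.mul_continuousOn i2)
  refine i3.congr_fun (fun x hx => ?_) measurableSet_Ioo
  have e : 1 - x ^ 2 = (1 - x) * (1 + x) := by ring
  simp only [Complex.finrank_real_complex, smul_eq_mul]
  rw [e, Real.mul_rpow (by linarith [hx.2]) (by linarith [hx.1])]
  ring

lemma isFiniteMeasure_areaMeasure {α : ℝ} (hα : -1 < α) : IsFiniteMeasure (areaMeasure α) := by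
  have : Integrable (fun _ : ℂ => (1:ℝ)) (areaMeasure α) := by
    rw [integrable_areaMeasure hα]
    simpa using integrableOn_wt hα
  simpa using (integrable_const_iff_isFiniteMeasure one_ne_zero).1 this

lemma ae_areaMeasure_mem (α : ℝ) : ∀ᵐ z ∂areaMeasure α, z ∈ unitDisc :=
  (withDensity_absolutelyContinuous _ _).ae_le (ae_restrict_mem measurableSet_unitDisc)

lemma aestronglyMeasurable_of_differentiableOn {α : ℝ} {f : ℂ → ℂ}
    (hf : DifferentiableOn ℂ f unitDisc) : AEStronglyMeasurable f (areaMeasure α) :=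
  (hf.continuousOn.aestronglyMeasurable measurableSet_unitDisc).mono_ac
    (withDensity_absolutelyContinuous _ _)

/-! ### The Bergman norm as an `L^p` norm -/

section Bergman

variable {p α : ℝ} {f g : ℂ → ℂ}

lemma bNorm_eq (hα : -1 < α) (f : ℂ → ℂ) :
    bNorm p α f = (∫ z, ‖f z‖ ^ p ∂areaMeasure α) ^ (1 / p) := by
  rw [integral_areaMeasure hα, bNorm]

lemma memAp_iff (hp : 1 < p) (hα : -1 < α) :
    MemAp p α f ↔ DifferentiableOn ℂ f unitDisc ∧ MemLp f (ENNReal.ofReal p) (areaMeasure α) := by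
  refine and_congr_right fun hf => ?_
  have hp0 : 0 < p := by linarith
  rw [← integrable_areaMeasure hα, ← integrable_norm_rpow_iff
    (aestronglyMeasurable_of_differentiableOn hf) (by simpa using hp0) ENNReal.ofReal_ne_top,
    ENNReal.toReal_ofReal hp0.le]

lemma bNorm_eq_toReal (hp : 1 < p) (hα : -1 < α) (hf : MemAp p α f) :
    bNorm p α f = (eLpNorm f (ENNReal.ofReal p) (areaMeasure α)).toReal := by
  have hp0 : 0 < p := by linarith
  rw [((memAp_iff hp hα).1 hf).2.eLpNorm_eq_integral_rpow_norm (by simpa using hp0)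
    ENNReal.ofReal_ne_top, ENNReal.toReal_ofReal hp0.le, ENNReal.toReal_ofReal (by positivity),
    bNorm_eq hα, one_div]

lemma bNorm_nonneg (hα : -1 < α) (f : ℂ → ℂ) : 0 ≤ bNorm p α f := by
  rw [bNorm_eq hα]
  positivity

lemma MemAp.add (hp : 1 < p) (hα : -1 < α) (hf : MemAp p α f) (hg : MemAp p α g) :
    MemAp p α (f + g) := by
  rw [memAp_iff hp hα] at *
  exact ⟨hf.1.add hg.1, hf.2.add hg.2⟩

lemma MemAp.const_smul (hp : 1 < p) (hα : -1 < α) (hf : MemAp p α f) (c : ℂ) :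
    MemAp p α (c • f) := by
  rw [memAp_iff hp hα] at *
  exact ⟨hf.1.const_smul c, hf.2.const_smul c⟩

lemma MemAp.sub (hp : 1 < p) (hα : -1 < α) (hf : MemAp p α f) (hg : MemAp p α g) :
    MemAp p α (f - g) := by
  rw [memAp_iff hp hα] at *
  exact ⟨hf.1.sub hg.1, hf.2.sub hg.2⟩

lemma MemAp.polynomial (hp : 1 < p) (hα : -1 < α) (P : Polynomial ℂ) :
    MemAp p α (fun z => P.eval z) := by
  have := isFiniteMeasure_areaMeasure hα
  have hd : DifferentiableOn ℂ (fun z => P.eval z) unitDisc := P.differentiable.differentiableOn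
  rw [memAp_iff hp hα]
  obtain ⟨C, hC⟩ := (isCompact_closedBall (0:ℂ) 1).exists_bound_of_continuousOn
    P.continuous.continuousOn
  refine ⟨hd, MemLp.of_bound (aestronglyMeasurable_of_differentiableOn hd) C ?_⟩
  filter_upwards [ae_areaMeasure_mem α] with z hz
  exact hC z (ball_subset_closedBall hz)

lemma bNorm_sub_le (hp : 1 < p) (hα : -1 < α) (hf : MemAp p α f) (hg : MemAp p α g) :
    bNorm p α (f - g) ≤ bNorm p α f + bNorm p α g := by
  rw [bNorm_eq_toReal hp hα hf, bNorm_eq_toReal hp hα hg,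
    bNorm_eq_toReal hp hα (hf.sub hp hα hg)]
  have hf' := ((memAp_iff hp hα).1 hf).2
  have hg' := ((memAp_iff hp hα).1 hg).2
  rw [← ENNReal.toReal_add hf'.2.ne hg'.2.ne]
  refine ENNReal.toReal_mono (ENNReal.add_ne_top.2 ⟨hf'.2.ne, hg'.2.ne⟩) ?_
  exact eLpNorm_sub_le hf'.1 hg'.1 (by simpa using hp.le)

lemma bNorm_const_smul (hp : 1 < p) (hα : -1 < α) (hf : MemAp p α f) (c : ℂ) :
    bNorm p α (c • f) = ‖c‖ * bNorm p α f := by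
  rw [bNorm_eq_toReal hp hα hf, bNorm_eq_toReal hp hα (hf.const_smul hp hα c),
    eLpNorm_const_smul, ENNReal.toReal_mul, toReal_enorm]

/-- The bound `Re φ(f) ≤ ‖φ‖ ‖f‖`, with a positive upper bound `c` in place of `‖f‖`. -/
lemma re_le_mul_dualNorm (hp : 1 < p) (hα : -1 < α) {φ : (ℂ → ℂ) →ₗ[ℂ] ℂ}
    (hbdd : BddAbove {r | ∃ f, MemAp p α f ∧ bNorm p α f ≤ 1 ∧ r = (φ f).re})
    (hf : MemAp p α f) {c : ℝ} (hc : 0 < c) (hfc : bNorm p α f ≤ c) :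
    (φ f).re ≤ c * dualNorm p α φ := by
  have h : (φ (((c⁻¹ : ℝ) : ℂ) • f)).re ≤ dualNorm p α φ := by
    refine le_csSup hbdd ⟨_, hf.const_smul hp hα _, ?_, rfl⟩
    rw [bNorm_const_smul hp hα hf, Complex.norm_real, Real.norm_of_nonneg (by positivity)]
    exact inv_mul_le_one_of_le₀ hfc hc.le
  rw [map_smul, smul_eq_mul, Complex.re_ofReal_mul] at h
  rwa [inv_mul_le_iff₀ hc] at h

lemma integral_eq_one_of_bNorm (hp : 1 < p) (hα : -1 < α) (hf : bNorm p α f = 1) :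
    ∫ z, ‖f z‖ ^ p ∂areaMeasure α = 1 := by
  rw [bNorm_eq hα] at hf
  have hI : 0 ≤ ∫ z, ‖f z‖ ^ p ∂areaMeasure α := by positivity
  have hp0 : p ≠ 0 := by linarith
  calc ∫ z, ‖f z‖ ^ p ∂areaMeasure α
      = ((∫ z, ‖f z‖ ^ p ∂areaMeasure α) ^ (1 / p)) ^ p := by
        rw [← Real.rpow_mul hI, one_div_mul_cancel hp0, Real.rpow_one]
    _ = 1 := by rw [hf, Real.one_rpow]

lemma MemAp.integrable (hα : -1 < α) (hf : MemAp p α f) :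
    Integrable (fun z => ‖f z‖ ^ p) (areaMeasure α) :=
  (integrable_areaMeasure hα _).2 hf.2

end Bergman

/-! ### Extremal functions and extremal polynomials -/

/-- The lower bound for `Re φ(F_n)`: compare `F_n` with the normalization of a near-best
polynomial approximant of `F`. -/
lemma re_extremalPoly_ge {p α : ℝ} (hp : 1 < p) (hα : -1 < α) {φ : (ℂ → ℂ) →ₗ[ℂ] ℂ}
    (hbdd : BddAbove {r | ∃ f, MemAp p α f ∧ bNorm p α f ≤ 1 ∧ r = (φ f).re})
    (hφne : 0 < dualNorm p α φ) {F : ℂ → ℂ} (hF : IsExtremalFn p α φ F)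
    {n : ℕ} {Fn : Polynomial ℂ} (hFn : IsExtremalPoly p α φ n Fn)
    {δ : ℝ} (hδ0 : 0 < δ) (hEn : polyErr p α n F ≤ δ) :
    (1 - δ) / (1 + δ) * dualNorm p α φ ≤ (φ fun z => Fn.eval z).re := by
  obtain ⟨hFA, hF1, hFD⟩ := hF
  obtain ⟨-, -, hmax⟩ := hFn
  have hR0 : 0 ≤ (φ fun z => Fn.eval z).re := by
    have e : (fun z : ℂ => (0 : Polynomial ℂ).eval z) = 0 := by ext; simp
    have hp0 : p ≠ 0 := by linarith
    have h := hmax 0 (by simp) (by simp [bNorm, Real.zero_rpow hp0, hp0])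
    rwa [e, map_zero, Complex.zero_re] at h
  set R := (φ fun z => Fn.eval z).re
  set D := dualNorm p α φ
  -- the infimum defining `polyErr` need not be known to be attained, so `δ` is first increased
  have key : ∀ ε, δ < ε → (1 - ε) * D ≤ (1 + ε) * R := by
    intro ε hε
    have hε0 : 0 < ε := hδ0.trans hε
    obtain ⟨_, ⟨P, hPn, rfl⟩, hP⟩ := exists_lt_of_csInf_lt
      (s := {e | ∃ P : Polynomial ℂ, P.natDegree ≤ n ∧ e = bNorm p α fun z => F z - P.eval z})
      ⟨_, 0, by simp, rfl⟩ (lt_of_le_of_lt hEn hε)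
    have hPA := MemAp.polynomial hp hα P
    have h1 := re_le_mul_dualNorm hp hα hbdd (hFA.sub hp hα hPA) hε0 hP.le
    rw [map_sub, Complex.sub_re, hFD] at h1
    have h2 : bNorm p α (fun z => P.eval z) ≤ 1 + ε := by
      have h := bNorm_sub_le hp hα hFA (hFA.sub hp hα hPA)
      rw [sub_sub_cancel, hF1] at h
      exact h.trans (add_le_add_right hP.le 1)
    have h1ε : 0 < 1 + ε := by linarith
    have e : (fun z => (Polynomial.C (((1 + ε)⁻¹ : ℝ) : ℂ) * P).eval z) =
        (((1 + ε)⁻¹ : ℝ) : ℂ) • fun z => P.eval z := by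
      ext z; simp
    have h3 := hmax (Polynomial.C (((1 + ε)⁻¹ : ℝ) : ℂ) * P)
      ((Polynomial.natDegree_C_mul_le _ _).trans hPn) (by
        rw [e, bNorm_const_smul hp hα hPA, Complex.norm_real, Real.norm_of_nonneg (by positivity)]
        exact inv_mul_le_one_of_le₀ h2 h1ε.le)
    rw [e, map_smul, smul_eq_mul, Complex.re_ofReal_mul, inv_mul_le_iff₀ h1ε] at h3
    linarith
  have hDR : 0 < D + R := by linarith
  have hlim : (D - R) / (D + R) ≤ δ := by
    refine le_of_forall_gt_imp_ge_of_dense fun ε hε => ?_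
    rw [div_le_iff₀ hDR]
    linarith [key ε hε]
  rw [div_le_iff₀ hDR] at hlim
  rw [div_mul_eq_mul_div, div_le_iff₀ (by linarith)]
  linarith

/-- If `F` is the extremal function for a nonzero bounded linear functional `φ`
on `A^p_α`, `F_n` the degree-`n` extremal polynomial for `φ`, and
`E_n^{p,α}(F) ≤ δ` with `0 < δ < 1`, then
`Re φ(F_n) ≥ ((1-δ)/(1+δ))‖φ‖`, and consequently
`‖F - F_n‖_{p,α} ≤ √(8/(p-1)) δ^{1/2}` for `1 < p ≤ 2` and
`‖F - F_n‖_{p,α} ≤ 2 p^{1/p} δ^{1/p}` for `2 ≤ p < ∞`. -/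
theorem extremal_poly_approximation
    (p α : ℝ) (hp : 1 < p) (hα : -1 < α)
    (φ : (ℂ → ℂ) →ₗ[ℂ] ℂ)
    (hbdd : BddAbove {r | ∃ f, MemAp p α f ∧ bNorm p α f ≤ 1 ∧ r = (φ f).re})
    (hφne : 0 < dualNorm p α φ)
    (F : ℂ → ℂ) (hF : IsExtremalFn p α φ F)
    (n : ℕ) (Fn : Polynomial ℂ) (hFn : IsExtremalPoly p α φ n Fn)
    (δ : ℝ) (hδ0 : 0 < δ) (hδ1 : δ < 1) (hEn : polyErr p α n F ≤ δ) :
    (1 - δ) / (1 + δ) * dualNorm p α φ ≤ (φ fun z => Fn.eval z).re ∧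
    (p ≤ 2 → bNorm p α (fun z => F z - Fn.eval z)
        ≤ Real.sqrt (8 / (p - 1)) * δ ^ ((1:ℝ)/2)) ∧
    (2 ≤ p → bNorm p α (fun z => F z - Fn.eval z)
        ≤ 2 * p ^ (1/p) * δ ^ (1/p)) := by
  have hp0 : 0 < p := by linarith
  have hR := re_extremalPoly_ge hp hα hbdd hφne hF hFn hδ0 hEn
  refine ⟨hR, ?_⟩
  obtain ⟨hFA, hF1, hFD⟩ := hF
  obtain ⟨-, hFn1, -⟩ := hFn
  have hPA := MemAp.polynomial hp hα Fn
  set Q : ℂ → ℂ := fun z => Fn.eval z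
  set u : ℂ → ℂ := (((1 / 2 : ℝ)) : ℂ) • (F + Q) with hu
  set v : ℂ → ℂ := (((1 / 2 : ℝ)) : ℂ) • (F - Q) with hv
  have huA : MemAp p α u := (hFA.add hp hα hPA).const_smul hp hα _
  have hvA : MemAp p α v := (hFA.sub hp hα hPA).const_smul hp hα _
  have hsum : ∀ z, u z + v z = F z := fun z => by simp [hu, hv]; ring
  have hdiff : ∀ z, u z - v z = Q z := fun z => by simp [hu, hv]; ring
  have hnorm : bNorm p α (fun z => F z - Fn.eval z) = 2 * bNorm p α v := by
    rw [hv, bNorm_const_smul hp hα (hFA.sub hp hα hPA), Complex.norm_real,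
      Real.norm_of_nonneg (by norm_num), ← mul_assoc, mul_one_div_cancel two_ne_zero, one_mul]
    rfl
  have hv0 : 0 ≤ bNorm p α v := bNorm_nonneg hα v
  -- the midpoint of `F` and `F_n` has norm close to `1`, since `φ` is large on it
  have hu1 : 1 - δ ≤ bNorm p α u := by
    by_contra! hlt
    have h := re_le_mul_dualNorm hp hα hbdd huA (by linarith) hlt.le
    rw [hu, map_smul, smul_eq_mul, Complex.re_ofReal_mul, map_add, Complex.add_re, hFD] at h
    have h1 : 2 * (1 - δ) < 1 + (1 - δ) / (1 + δ) := by
      have : (1 - δ) / (1 + δ) = 1 - 2 * δ / (1 + δ) := by field_simp; ring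
      have : 2 * δ / (1 + δ) < 2 * δ := div_lt_self (by linarith) (by linarith)
      linarith
    nlinarith
  have iu := huA.integrable hα
  have iv := hvA.integrable hα
  have is : Integrable (fun z => ‖u z + v z‖ ^ p) (areaMeasure α) := by
    simpa only [hsum] using hFA.integrable hα
  have id : Integrable (fun z => ‖u z - v z‖ ^ p) (areaMeasure α) := by
    simpa only [hdiff] using hPA.integrable hα
  have is1 : ∫ z, ‖u z + v z‖ ^ p ∂areaMeasure α = 1 := by
    simpa only [hsum] using integral_eq_one_of_bNorm hp hα hF1
  have id1 : ∫ z, ‖u z - v z‖ ^ p ∂areaMeasure α = 1 := by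
    simpa only [hdiff] using integral_eq_one_of_bNorm hp hα hFn1
  have hA0 : 0 ≤ ∫ z, ‖u z‖ ^ p ∂areaMeasure α := by positivity
  have hB0 : 0 ≤ ∫ z, ‖v z‖ ^ p ∂areaMeasure α := by positivity
  rw [hnorm]
  refine ⟨fun hp2 => ?_, fun hp2 => ?_⟩
  · have hk : 0 < p - 1 := by linarith
    have hquad : (p - 1) * bNorm p α v ^ 2 ≤ 2 * δ := by
      rcases hB0.eq_or_lt with hB | hB
      · rw [bNorm_eq hα v, ← hB, Real.zero_rpow (by positivity)]
        simp [hδ0.le]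
      · have hA : 0 < ∫ z, ‖u z‖ ^ p ∂areaMeasure α := by
          refine hA0.lt_of_ne fun h => ?_
          rw [bNorm_eq hα, ← h, Real.zero_rpow (by positivity)] at hu1
          linarith
        have h := two_uniform_convexity hp hp2 iu iv is id is1 id1 hA hB
        rw [← bNorm_eq hα, ← bNorm_eq hα] at h
        nlinarith
    rw [← Real.sqrt_eq_rpow, ← Real.sqrt_mul (by positivity)]
    refine Real.le_sqrt_of_sq_le ?_
    rw [div_mul_eq_mul_div, le_div_iff₀ hk]
    linarith
  · have h := clarkson_integral hp2 iu iv is id is1 id1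
    have hA : 1 - p * δ ≤ ∫ z, ‖u z‖ ^ p ∂areaMeasure α := by
      have h1 := one_add_mul_self_le_rpow_one_add (s := -δ) (by linarith) hp.le
      have h2 := Real.rpow_le_rpow (by linarith) hu1 hp0.le
      rw [bNorm_eq hα, ← Real.rpow_mul hA0, one_div_mul_cancel hp0.ne', Real.rpow_one] at h2
      rw [← sub_eq_add_neg] at h1
      linarith
    rw [mul_assoc, ← Real.mul_rpow hp0.le hδ0.le, bNorm_eq hα]
    refine mul_le_mul_of_nonneg_left ?_ zero_le_two
    exact Real.rpow_le_rpow hB0 (by linarith) (by positivity)
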